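/- On an almost quaternion-Hermitian manifold, for any local adapted basis I,J,K the Levi-Civita covariant derivative of ω_I is determined by the exterior derivatives of the local Kähler forms: 2∇ω_I = (1 − I_{(23)}) dω_I + (I_{(2)} + I_{(3)}) J_{(1)} dω_J − (1 − I_{(23)}) J_{(1)} dω_K, and also 2∇ω_I = (1 − I_{(23)}) dω_I + (I_{(2)} + I_{(3)}) K_{(1)} dω_K + (1 − I_{(23)}) K_{(1)} dω_J. The corresponding formulas for ∇ω_J and ∇ω_K hold after cyclic permutation of (I,J,K). -/

import Mathlib

/-!  Synthetic (Koszul-style) model of an almost quaternion-Hermitian `4n`-manifold.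

`C` plays the role of the commutative ℝ-algebra of smooth functions and `V` that of
the `C`-module of vector fields, equipped with a directional derivative `D`, a Lie
bracket, a Riemannian metric `g` together with its Levi-Civita connection `nab`
(characterised by being torsion-free and metric), a local adapted basis `I, J, K`
of anticommuting almost complex structures with `K = I J`, each compatible with the
metric, and a (local) orthonormal frame.  -/

noncomputable section

open scoped BigOperators

structure AQH (n : ℕ) (C : Type*) (V : Type*) [CommRing C] [Algebra ℝ C]
    [AddCommGroup V] [Module C V] where
  /-- derivative of a function along a vector field -/
  D : V → C → C
  D_add : ∀ X f g, D X (f + g) = D X f + D X g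
  D_mul : ∀ X f g, D X (f * g) = f * D X g + g * D X f
  D_const : ∀ X (r : ℝ), D X (algebraMap ℝ C r) = 0
  D_addX : ∀ X Y f, D (X + Y) f = D X f + D Y f
  D_smulX : ∀ (f : C) (X : V) (h : C), D (f • X) h = f * D X h
  /-- the Lie bracket of vector fields -/
  bracket : V → V → V
  bracket_skew : ∀ X Y, bracket X Y = -bracket Y X
  bracket_add : ∀ X Y Z, bracket X (Y + Z) = bracket X Y + bracket X Z
  bracket_smul : ∀ X (f : C) Y, bracket X (f • Y) = f • bracket X Y + (D X f) • Y
  bracket_jacobi : ∀ X Y Z,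
    bracket X (bracket Y Z) + bracket Y (bracket Z X) + bracket Z (bracket X Y) = 0
  D_bracket : ∀ X Y f, D (bracket X Y) f = D X (D Y f) - D Y (D X f)
  /-- the Riemannian metric -/
  g : V → V → C
  g_symm : ∀ X Y, g X Y = g Y X
  g_add : ∀ X Y Z, g (X + Y) Z = g X Z + g Y Z
  g_smul : ∀ (f : C) X Y, g (f • X) Y = f * g X Y
  /-- the Levi-Civita connection -/
  nab : V → V → V
  nab_addX : ∀ X Y Z, nab (X + Y) Z = nab X Z + nab Y Z
  nab_smulX : ∀ (f : C) X Y, nab (f • X) Y = f • nab X Y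
  nab_add : ∀ X Y Z, nab X (Y + Z) = nab X Y + nab X Z
  nab_leibniz : ∀ X (f : C) Y, nab X (f • Y) = f • nab X Y + (D X f) • Y
  torsion_free : ∀ X Y, nab X Y - nab Y X = bracket X Y
  nab_metric : ∀ X Y Z, D X (g Y Z) = g (nab X Y) Z + g Y (nab X Z)
  /-- the (local) adapted basis of almost complex structures -/
  I : V → V
  J : V → V
  K : V → V
  I_lin : ∀ (f : C) X Y, I (f • X + Y) = f • I X + I Y
  J_lin : ∀ (f : C) X Y, J (f • X + Y) = f • J X + J Y
  K_lin : ∀ (f : C) X Y, K (f • X + Y) = f • K X + K Y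
  I_sq : ∀ X, I (I X) = -X
  J_sq : ∀ X, J (J X) = -X
  K_def : ∀ X, K X = I (J X)
  anticomm : ∀ X, I (J X) = -J (I X)
  I_metric : ∀ X Y, g (I X) (I Y) = g X Y
  J_metric : ∀ X Y, g (J X) (J Y) = g X Y
  /-- a (local) orthonormal frame -/
  frame : Fin (4 * n) → V
  frame_orthonormal : ∀ i j, g (frame i) (frame j) = if i = j then 1 else 0
  frame_span : ∀ X, X = ∑ i, g X (frame i) • frame i

namespace AQH

section ops

variable {C V : Type*} [CommRing C]

/-- the operator `A_(1)` on covariant 3-tensors -/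
def op1 (A : V → V) (ψ : V → V → V → C) : V → V → V → C := fun X Y Z => -ψ (A X) Y Z

/-- the operator `A_(2)` on covariant 3-tensors -/
def op2 (A : V → V) (ψ : V → V → V → C) : V → V → V → C := fun X Y Z => -ψ X (A Y) Z

/-- the operator `A_(3)` on covariant 3-tensors -/
def op3 (A : V → V) (ψ : V → V → V → C) : V → V → V → C := fun X Y Z => -ψ X Y (A Z)

/-- the operator `A_(12) = A_(1) A_(2)` on covariant 3-tensors -/
def op12 (A : V → V) (ψ : V → V → V → C) : V → V → V → C := fun X Y Z => ψ (A X) (A Y) Z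

/-- the operator `A_(13) = A_(1) A_(3)` on covariant 3-tensors -/
def op13 (A : V → V) (ψ : V → V → V → C) : V → V → V → C := fun X Y Z => ψ (A X) Y (A Z)

/-- the operator `A_(23) = A_(2) A_(3)` on covariant 3-tensors -/
def op23 (A : V → V) (ψ : V → V → V → C) : V → V → V → C := fun X Y Z => ψ X (A Y) (A Z)

/-- the operator `𝓛_A = A_(12) + A_(13) + A_(23)` on three-forms -/
def calL (A : V → V) (ψ : V → V → V → C) : V → V → V → C :=
  fun X Y Z => op12 A ψ X Y Z + op13 A ψ X Y Z + op23 A ψ X Y Z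

/-- the action `(A ν)(X) = -ν (A X)` of `A` on a one-form -/
def act1 (A : V → V) (ν : V → C) : V → C := fun X => -ν (A X)

/-- the action `(A ψ)(X,Y,Z) = -ψ(AX,AY,AZ)` of `A` on a three-form -/
def act3 (A : V → V) (ψ : V → V → V → C) : V → V → V → C :=
  fun X Y Z => -ψ (A X) (A Y) (A Z)

/-- wedge product of two one-forms -/
def wedge11 (α β : V → C) : V → V → C := fun X Y => α X * β Y - α Y * β X

/-- wedge product of a one-form and a two-form -/
def wedge12 (ν : V → C) (ω : V → V → C) : V → V → V → C :=
  fun X Y Z => ν X * ω Y Z - ν Y * ω X Z + ν Z * ω X Y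

/-- wedge product of two two-forms -/
def wedge22 (α β : V → V → C) : V → V → V → V → C := fun X Y Z W =>
  α X Y * β Z W - α X Z * β Y W + α X W * β Y Z
    + α Z W * β X Y - α Y W * β X Z + α Y Z * β X W

/-- a (0,3)-tensor is an alternating three-form -/
def IsAlt3 (T : V → V → V → C) : Prop :=
  (∀ X Y Z, T Y X Z = -T X Y Z) ∧ (∀ X Y Z, T X Z Y = -T X Y Z)

variable [AddCommGroup V] [Module C V]

/-- `C`-linearity (tensoriality) of a three-form in its first argument -/
def Lin3 (T : V → V → V → C) : Prop :=
  ∀ (f : C) X X' Y Z, T (f • X + X') Y Z = f * T X Y Z + T X' Y Z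

/-- `C`-linearity (tensoriality) of a one-form -/
def Lin1 (ν : V → C) : Prop := ∀ (f : C) X X', ν (f • X + X') = f * ν X + ν X'

end ops

section derived

variable {n : ℕ} {C V : Type*} [CommRing C] [Algebra ℝ C] [AddCommGroup V] [Module C V]
  [Module ℝ V] [IsScalarTower ℝ C V]

variable (M : AQH n C V)

/-- the Kähler form `ω_A(X,Y) = g(X, A Y)` -/
def omega (A : V → V) : V → V → C := fun X Y => M.g X (A Y)

/-- `(∇_X A) Y` -/
def nabA (A : V → V) : V → V → V := fun X Y => M.nab X (A Y) - A (M.nab X Y)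

/-- covariant derivative of a 2-form: `(∇_X ψ)(Y,Z)` -/
def nab2 (ψ : V → V → C) : V → V → V → C :=
  fun X Y Z => M.D X (ψ Y Z) - ψ (M.nab X Y) Z - ψ Y (M.nab X Z)

/-- covariant derivative of a 4-form -/
def nab4 (ψ : V → V → V → V → C) : V → V → V → V → V → C :=
  fun X Y Z W U => M.D X (ψ Y Z W U) - ψ (M.nab X Y) Z W U - ψ Y (M.nab X Z) W U
    - ψ Y Z (M.nab X W) U - ψ Y Z W (M.nab X U)

/-- exterior derivative of a one-form -/
def d1 (ν : V → C) : V → V → C :=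
  fun X Y => M.D X (ν Y) - M.D Y (ν X) - ν (M.bracket X Y)

/-- exterior derivative of a two-form -/
def d2 (ψ : V → V → C) : V → V → V → C :=
  fun X Y Z => M.D X (ψ Y Z) - M.D Y (ψ X Z) + M.D Z (ψ X Y)
    - ψ (M.bracket X Y) Z + ψ (M.bracket X Z) Y - ψ (M.bracket Y Z) X

/-- exterior derivative of a four-form -/
def d4 (ψ : V → V → V → V → C) : V → V → V → V → V → C := fun X Y Z W U =>
  M.D X (ψ Y Z W U) - M.D Y (ψ X Z W U) + M.D Z (ψ X Y W U) - M.D W (ψ X Y Z U)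
      + M.D U (ψ X Y Z W)
    - ψ (M.bracket X Y) Z W U + ψ (M.bracket X Z) Y W U - ψ (M.bracket X W) Y Z U
      + ψ (M.bracket X U) Y Z W
    - ψ (M.bracket Y Z) X W U + ψ (M.bracket Y W) X Z U - ψ (M.bracket Y U) X Z W
    - ψ (M.bracket Z W) X Y U + ψ (M.bracket Z U) X Y W
    - ψ (M.bracket W U) X Y Z

/-- the Nijenhuis tensor `N_A(X,Y)` -/
def nijV (A : V → V) : V → V → V := fun X Y =>
  M.bracket X Y + A (M.bracket (A X) Y) + A (M.bracket X (A Y)) - M.bracket (A X) (A Y)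

/-- the Nijenhuis `(0,3)`-tensor `N_A(X,Y,Z) = g(X, N_A(Y,Z))` -/
def nij3 (A : V → V) : V → V → V → C := fun X Y Z => M.g X (M.nijV A Y Z)

/-- the induced inner product of two 2-forms,
`⟨ψ,φ⟩ = (1/2!) ψ(e_i,e_j) φ(e_i,e_j)` -/
def inner2 (ψ φ : V → V → C) : C :=
  (1/2 : ℝ) • ∑ i, ∑ j, ψ (M.frame i) (M.frame j) * φ (M.frame i) (M.frame j)

/-- the contraction `(Λ_A β)(X) = ⟨X ⌟ β, ω_A⟩` of a three-form -/
def Lam (A : V → V) (β : V → V → V → C) : V → C :=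
  fun X => (1/2 : ℝ) •
    ∑ i, ∑ j, β X (M.frame i) (M.frame j) * M.omega A (M.frame i) (M.frame j)

/-- `λ_I(X) = (1/2n) ⟨∇_X ω_J, ω_K⟩` -/
def lambdaI : V → C := fun X =>
  (1/(2*(n:ℝ))) • M.inner2 (fun Y Z => M.nab2 (M.omega M.J) X Y Z) (M.omega M.K)

/-- `λ_J(X) = (1/2n) ⟨∇_X ω_K, ω_I⟩` -/
def lambdaJ : V → C := fun X =>
  (1/(2*(n:ℝ))) • M.inner2 (fun Y Z => M.nab2 (M.omega M.K) X Y Z) (M.omega M.I)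

/-- `λ_K(X) = (1/2n) ⟨∇_X ω_I, ω_J⟩` -/
def lambdaK : V → C := fun X =>
  (1/(2*(n:ℝ))) • M.inner2 (fun Y Z => M.nab2 (M.omega M.I) X Y Z) (M.omega M.J)

/-- codifferential of a two-form -/
def codiff2 (ψ : V → V → C) : V → C := fun Z => -∑ i, M.nab2 ψ (M.frame i) (M.frame i) Z

/-- codifferential of a four-form -/
def codiff4 (ψ : V → V → V → V → C) : V → V → V → C :=
  fun X Y Z => -∑ i, M.nab4 ψ (M.frame i) (M.frame i) X Y Z

/-- `β_I = J dω_J + K dω_K` -/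
def betaI : V → V → V → C := fun X Y Z =>
  act3 M.J (M.d2 (M.omega M.J)) X Y Z + act3 M.K (M.d2 (M.omega M.K)) X Y Z

/-- `β_J = K dω_K + I dω_I` -/
def betaJ : V → V → V → C := fun X Y Z =>
  act3 M.K (M.d2 (M.omega M.K)) X Y Z + act3 M.I (M.d2 (M.omega M.I)) X Y Z

/-- `β_K = I dω_I + J dω_J` -/
def betaK : V → V → V → C := fun X Y Z =>
  act3 M.I (M.d2 (M.omega M.I)) X Y Z + act3 M.J (M.d2 (M.omega M.J)) X Y Z

/-- the intrinsic torsion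
`ξ_X Y = -(1/4) Σ_A A (∇_X A) Y + (1/2) Σ_A λ_A(X) A Y` -/
def xi : V → V → V := fun X Y =>
  (-(1/4 : ℝ)) • (M.I (M.nabA M.I X Y) + M.J (M.nabA M.J X Y) + M.K (M.nabA M.K X Y))
    + (1/2 : ℝ) • (M.lambdaI X • M.I Y + M.lambdaJ X • M.J Y + M.lambdaK X • M.K Y)

/-- the one-form `ν^I_4 = I Λ_I β_I` -/
def nu4I : V → C := act1 M.I (M.Lam M.I M.betaI)

/-- the one-form `ν^J_4 = J Λ_J β_J` -/
def nu4J : V → C := act1 M.J (M.Lam M.J M.betaJ)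

/-- the one-form `ν^K_4 = K Λ_K β_K` -/
def nu4K : V → C := act1 M.K (M.Lam M.K M.betaK)

/-- `ν^I_3`, determined by `J Λ_J β_I = (1/(2n-1)) (ν^I_4 + (2n+1)(n-1) ν^I_3)` -/
def nu3I : V → C := fun X =>
  (1/((2*(n:ℝ)+1) * ((n:ℝ)-1))) •
    ((2*(n:ℝ)-1) • act1 M.J (M.Lam M.J M.betaI) X - M.nu4I X)

/-- `ν^J_3`, determined by `K Λ_K β_J = (1/(2n-1)) (ν^J_4 + (2n+1)(n-1) ν^J_3)` -/
def nu3J : V → C := fun X =>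
  (1/((2*(n:ℝ)+1) * ((n:ℝ)-1))) •
    ((2*(n:ℝ)-1) • act1 M.K (M.Lam M.K M.betaJ) X - M.nu4J X)

/-- `ν^K_3`, determined by `I Λ_I β_K = (1/(2n-1)) (ν^K_4 + (2n+1)(n-1) ν^K_3)` -/
def nu3K : V → C := fun X =>
  (1/((2*(n:ℝ)+1) * ((n:ℝ)-1))) •
    ((2*(n:ℝ)-1) • act1 M.I (M.Lam M.I M.betaK) X - M.nu4K X)

/-- `β^{(E)}_{3I} = -(1/2) Jν^I_3 ∧ ω_J - (1/2) Kν^I_3 ∧ ω_K + (1/(2n-1)) Iν^I_3 ∧ ω_I` -/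
def betaE3I : V → V → V → C := fun X Y Z =>
  (-(1/2:ℝ)) • wedge12 (act1 M.J M.nu3I) (M.omega M.J) X Y Z
    + (-(1/2:ℝ)) • wedge12 (act1 M.K M.nu3I) (M.omega M.K) X Y Z
    + (1/(2*(n:ℝ)-1)) • wedge12 (act1 M.I M.nu3I) (M.omega M.I) X Y Z

def betaE3J : V → V → V → C := fun X Y Z =>
  (-(1/2:ℝ)) • wedge12 (act1 M.K M.nu3J) (M.omega M.K) X Y Z
    + (-(1/2:ℝ)) • wedge12 (act1 M.I M.nu3J) (M.omega M.I) X Y Z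
    + (1/(2*(n:ℝ)-1)) • wedge12 (act1 M.J M.nu3J) (M.omega M.J) X Y Z

def betaE3K : V → V → V → C := fun X Y Z =>
  (-(1/2:ℝ)) • wedge12 (act1 M.I M.nu3K) (M.omega M.I) X Y Z
    + (-(1/2:ℝ)) • wedge12 (act1 M.J M.nu3K) (M.omega M.J) X Y Z
    + (1/(2*(n:ℝ)-1)) • wedge12 (act1 M.K M.nu3K) (M.omega M.K) X Y Z

/-- `β_{4I} = -(1/(2n-1)) Iν^I_4 ∧ ω_I` -/
def beta4I : V → V → V → C := fun X Y Z =>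
  (-(1/(2*(n:ℝ)-1))) • wedge12 (act1 M.I M.nu4I) (M.omega M.I) X Y Z

def beta4J : V → V → V → C := fun X Y Z =>
  (-(1/(2*(n:ℝ)-1))) • wedge12 (act1 M.J M.nu4J) (M.omega M.J) X Y Z

def beta4K : V → V → V → C := fun X Y Z =>
  (-(1/(2*(n:ℝ)-1))) • wedge12 (act1 M.K M.nu4K) (M.omega M.K) X Y Z

/-- `β_I^{(3+K)} = β_I - β^{(E)}_{3I} - β_{4I}` -/
def beta3KI : V → V → V → C := fun X Y Z => M.betaI X Y Z - M.betaE3I X Y Z - M.beta4I X Y Z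

def beta3KJ : V → V → V → C := fun X Y Z => M.betaJ X Y Z - M.betaE3J X Y Z - M.beta4J X Y Z

def beta3KK : V → V → V → C := fun X Y Z => M.betaK X Y Z - M.betaE3K X Y Z - M.beta4K X Y Z

/-- `β_I^{(3)} = (1/6) (2 - 𝓛_J - 𝓛_K) β_I^{(3+K)}` -/
def beta3I : V → V → V → C := fun X Y Z =>
  (1/6:ℝ) • ((2:ℝ) • M.beta3KI X Y Z - calL M.J M.beta3KI X Y Z - calL M.K M.beta3KI X Y Z)

def beta3J : V → V → V → C := fun X Y Z =>
  (1/6:ℝ) • ((2:ℝ) • M.beta3KJ X Y Z - calL M.K M.beta3KJ X Y Z - calL M.I M.beta3KJ X Y Z)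

def beta3K : V → V → V → C := fun X Y Z =>
  (1/6:ℝ) • ((2:ℝ) • M.beta3KK X Y Z - calL M.I M.beta3KK X Y Z - calL M.J M.beta3KK X Y Z)

/-- `β_I^{(K)} = (1/6) (4 + 𝓛_J + 𝓛_K) β_I^{(3+K)}` -/
def betaKI : V → V → V → C := fun X Y Z =>
  (1/6:ℝ) • ((4:ℝ) • M.beta3KI X Y Z + calL M.J M.beta3KI X Y Z + calL M.K M.beta3KI X Y Z)

def betaKJ : V → V → V → C := fun X Y Z =>
  (1/6:ℝ) • ((4:ℝ) • M.beta3KJ X Y Z + calL M.K M.beta3KJ X Y Z + calL M.I M.beta3KJ X Y Z)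

def betaKK : V → V → V → C := fun X Y Z =>
  (1/6:ℝ) • ((4:ℝ) • M.beta3KK X Y Z + calL M.I M.beta3KK X Y Z + calL M.J M.beta3KK X Y Z)

/-- the three-form `ψ^{(3)} = (1/12)(β_I^{(3)} + β_J^{(3)} + β_K^{(3)})` determining `ξ_{33}` -/
def psi3 : V → V → V → C := fun X Y Z =>
  (1/12:ℝ) • (M.beta3I X Y Z + M.beta3J X Y Z + M.beta3K X Y Z)

/-- the three-form `ψ^{(K)} = -(1/48)(β_I^{(K)} + β_J^{(K)} + β_K^{(K)})` determining `ξ_{KH}` -/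
def psiK : V → V → V → C := fun X Y Z =>
  (-(1/48:ℝ)) • (M.betaKI X Y Z + M.betaKJ X Y Z + M.betaKK X Y Z)

/-- the three-form `ψ^{(3)}_I` determining `ξ_{3H}` -/
def psi3I : V → V → V → C := fun X Y Z =>
  (-(1/8:ℝ)) • M.beta3I X Y Z
    + (1/48:ℝ) • ((3:ℝ) • (M.beta3I X Y Z + M.beta3J X Y Z + M.beta3K X Y Z)
        + calL M.I (fun a b c => M.beta3I a b c + M.beta3J a b c + M.beta3K a b c) X Y Z)

def psi3J : V → V → V → C := fun X Y Z =>
  (-(1/8:ℝ)) • M.beta3J X Y Z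
    + (1/48:ℝ) • ((3:ℝ) • (M.beta3I X Y Z + M.beta3J X Y Z + M.beta3K X Y Z)
        + calL M.J (fun a b c => M.beta3I a b c + M.beta3J a b c + M.beta3K a b c) X Y Z)

def psi3K : V → V → V → C := fun X Y Z =>
  (-(1/8:ℝ)) • M.beta3K X Y Z
    + (1/48:ℝ) • ((3:ℝ) • (M.beta3I X Y Z + M.beta3J X Y Z + M.beta3K X Y Z)
        + calL M.K (fun a b c => M.beta3I a b c + M.beta3J a b c + M.beta3K a b c) X Y Z)

/-- the three-form `ψ^{(K)}_I` determining `ξ_{K3}` -/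
def psiKI : V → V → V → C := fun X Y Z =>
  (-(1/2:ℝ)) • M.betaKI X Y Z
    + (1/6:ℝ) • (M.betaKI X Y Z + M.betaKJ X Y Z + M.betaKK X Y Z)

def psiKJ : V → V → V → C := fun X Y Z =>
  (-(1/2:ℝ)) • M.betaKJ X Y Z
    + (1/6:ℝ) • (M.betaKI X Y Z + M.betaKJ X Y Z + M.betaKK X Y Z)

def psiKK : V → V → V → C := fun X Y Z =>
  (-(1/2:ℝ)) • M.betaKK X Y Z
    + (1/6:ℝ) • (M.betaKI X Y Z + M.betaKJ X Y Z + M.betaKK X Y Z)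

/-- the one-form `θ^ξ` determining `ξ_{EH}`,
defined by `(6/n)(2n+1)(n-1) θ^ξ(X) = -⟨ξ_{e_i} e_i, X⟩` -/
def thetaXi : V → C := fun X =>
  (-((n:ℝ)/(6*(2*(n:ℝ)+1)*((n:ℝ)-1)))) • ∑ i, M.g (M.xi (M.frame i) (M.frame i)) X

/-- the local one-form `θ^ξ_I`, defined by `(2/n)(2n+1)(n-1) θ^ξ_I(X) = -⟨I ξ_{e_i} I e_i, X⟩` -/
def thetaXiI : V → C := fun X =>
  (-((n:ℝ)/(2*(2*(n:ℝ)+1)*((n:ℝ)-1)))) •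
    ∑ i, M.g (M.I (M.xi (M.frame i) (M.I (M.frame i)))) X

def thetaXiJ : V → C := fun X =>
  (-((n:ℝ)/(2*(2*(n:ℝ)+1)*((n:ℝ)-1)))) •
    ∑ i, M.g (M.J (M.xi (M.frame i) (M.J (M.frame i)))) X

def thetaXiK : V → C := fun X =>
  (-((n:ℝ)/(2*(2*(n:ℝ)+1)*((n:ℝ)-1)))) •
    ∑ i, M.g (M.K (M.xi (M.frame i) (M.K (M.frame i)))) X

/-- `α_I = -λ_I ⊗ g + (1/2)(J_(2) - J_(3)) ∇ω_K` -/
def alphaI : V → V → V → C := fun X Y Z =>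
  -(M.lambdaI X * M.g Y Z)
    + (1/2:ℝ) • (-(M.nab2 (M.omega M.K) X (M.J Y) Z) + M.nab2 (M.omega M.K) X Y (M.J Z))

def alphaJ : V → V → V → C := fun X Y Z =>
  -(M.lambdaJ X * M.g Y Z)
    + (1/2:ℝ) • (-(M.nab2 (M.omega M.I) X (M.K Y) Z) + M.nab2 (M.omega M.I) X Y (M.K Z))

def alphaK : V → V → V → C := fun X Y Z =>
  -(M.lambdaK X * M.g Y Z)
    + (1/2:ℝ) • (-(M.nab2 (M.omega M.J) X (M.I Y) Z) + M.nab2 (M.omega M.J) X Y (M.I Z))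

/-- the one-form `η_I(X) = α_I(e_i; e_i, X)` -/
def etaI : V → C := fun X => ∑ i, M.alphaI (M.frame i) (M.frame i) X

def etaJ : V → C := fun X => ∑ i, M.alphaJ (M.frame i) (M.frame i) X

def etaK : V → C := fun X => ∑ i, M.alphaK (M.frame i) (M.frame i) X

/-- the fundamental four-form `Ω = Σ_A ω_A ∧ ω_A` -/
def Omega4 : V → V → V → V → C := fun X Y Z W =>
  wedge22 (M.omega M.I) (M.omega M.I) X Y Z W
    + wedge22 (M.omega M.J) (M.omega M.J) X Y Z W
    + wedge22 (M.omega M.K) (M.omega M.K) X Y Z W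

/-- the one-form `θ^{d*Ω} = (1/3) Σ_A A Λ_A d*Ω` -/
def thetaDOmega : V → C := fun X =>
  (1/3:ℝ) • (act1 M.I (M.Lam M.I (M.codiff4 M.Omega4)) X
    + act1 M.J (M.Lam M.J (M.codiff4 M.Omega4)) X
    + act1 M.K (M.Lam M.K (M.codiff4 M.Omega4)) X)

/-- the vector-valued torsion: `g(W, T(X,Y)) = T(W,X,Y)` -/
def Tvec (T : V → V → V → C) : V → V → V := fun X Y => ∑ i, T (M.frame i) X Y • M.frame i

/-- the connection `∇ + (1/2) T` associated to a torsion (0,3)-tensor `T` -/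
def nabT (T : V → V → V → C) : V → V → V := fun X Y => M.nab X Y + (1/2:ℝ) • M.Tvec T X Y

/-- a connection is metric -/
def MetricConn (nab' : V → V → V) : Prop :=
  ∀ X Y Z, M.D X (M.g Y Z) = M.g (nab' X Y) Z + M.g Y (nab' X Z)

/-- a connection is quaternionic, with associated local one-forms `γ_I, γ_J, γ_K`:
`∇'_X I = γ_K(X) J - γ_J(X) K`, and cyclically -/
def QuatConn (nab' : V → V → V) (γI γJ γK : V → C) : Prop :=
  (∀ X Y, nab' X (M.I Y) - M.I (nab' X Y) = γK X • M.J Y - γJ X • M.K Y) ∧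
  (∀ X Y, nab' X (M.J Y) - M.J (nab' X Y) = γI X • M.K Y - γK X • M.I Y) ∧
  (∀ X Y, nab' X (M.K Y) - M.K (nab' X Y) = γJ X • M.I Y - γI X • M.J Y)

/-- the HKT condition: `I, J, K` integrable and there is a metric connection
`∇ + (1/2)T` with totally skew torsion making `I, J, K` parallel -/
def IsHKT : Prop :=
  (∀ X Y, M.nijV M.I X Y = 0) ∧ (∀ X Y, M.nijV M.J X Y = 0) ∧
  (∀ X Y, M.nijV M.K X Y = 0) ∧
  ∃ T : V → V → V → C, IsAlt3 T ∧ Lin3 T ∧ M.MetricConn (M.nabT T) ∧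
    (∀ X Y, M.nabT T X (M.I Y) = M.I (M.nabT T X Y)) ∧
    (∀ X Y, M.nabT T X (M.J Y) = M.J (M.nabT T X Y)) ∧
    (∀ X Y, M.nabT T X (M.K Y) = M.K (M.nabT T X Y))

/-- membership of a three-form in `KH`: type `{2,1}` for each `A` and `Λ_A ψ = 0` -/
def InKH3 (ψ : V → V → V → C) : Prop :=
  IsAlt3 ψ ∧ Lin3 ψ ∧
  calL M.I ψ = ψ ∧ calL M.J ψ = ψ ∧ calL M.K ψ = ψ ∧
  M.Lam M.I ψ = 0 ∧ M.Lam M.J ψ = 0 ∧ M.Lam M.K ψ = 0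

/-- the `(0,3)`-tensor of the `KH`-component of the torsion determined by `ψ^{(K)}`:
`3ψ - Σ_A A_(23) ψ` -/
def xiKH3 (ψ : V → V → V → C) : V → V → V → C := fun X Y Z =>
  (3:ℝ) • ψ X Y Z - (op23 M.I ψ X Y Z + op23 M.J ψ X Y Z + op23 M.K ψ X Y Z)

/-- the `(0,3)`-tensor of the `EH`-component of the torsion determined by the
one-form `θ`: `3 e_i ⊗ e_i ∧ θ - Σ_A (e_i ⊗ A e_i ∧ A θ + (2/n) A θ ⊗ ω_A)` -/
def xiEH3 (θ : V → C) : V → V → V → C := fun X Y Z =>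
  (3:ℝ) • ∑ i, M.g (M.frame i) X *
      (M.g (M.frame i) Y * θ Z - M.g (M.frame i) Z * θ Y)
  - ((∑ i, M.g (M.frame i) X *
        (M.g (M.I (M.frame i)) Y * act1 M.I θ Z - M.g (M.I (M.frame i)) Z * act1 M.I θ Y))
    + (∑ i, M.g (M.frame i) X *
        (M.g (M.J (M.frame i)) Y * act1 M.J θ Z - M.g (M.J (M.frame i)) Z * act1 M.J θ Y))
    + (∑ i, M.g (M.frame i) X *
        (M.g (M.K (M.frame i)) Y * act1 M.K θ Z - M.g (M.K (M.frame i)) Z * act1 M.K θ Y)))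
  - (2/(n:ℝ)) • (act1 M.I θ X * M.omega M.I Y Z + act1 M.J θ X * M.omega M.J Y Z
      + act1 M.K θ X * M.omega M.K Y Z)

/-- the intrinsic torsion lies in `(K+E)H`: it is the sum of a `KH`-tensor and an
`EH`-tensor as described in §3 of the paper -/
def inKEH : Prop :=
  ∃ (ψ : V → V → V → C) (θ : V → C), M.InKH3 ψ ∧ Lin1 θ ∧
    ∀ X Y Z, M.g Y (M.xi X Z) = M.xiKH3 ψ X Y Z + M.xiEH3 θ X Y Z

end derived

end AQH

namespace AQH

section helpers

variable {n : ℕ} {C V : Type*} [CommRing C] [Algebra ℝ C] [AddCommGroup V] [Module C V]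
variable (M : AQH n C V)

theorem h_D_zero (X : V) : M.D X 0 = 0 := by
  have h := M.D_add X 0 0
  simp only [add_zero] at h
  exact left_eq_add.mp h

theorem h_D_neg (X : V) (f : C) : M.D X (-f) = -M.D X f := by
  have h := M.D_add X f (-f)
  rw [add_neg_cancel, h_D_zero] at h
  linear_combination -h

theorem h_g_neg (X Y : V) : M.g (-X) Y = -M.g X Y := by
  have h := M.g_smul (-1) X Y
  simpa using h

theorem h_g_neg' (X Y : V) : M.g X (-Y) = -M.g X Y := by
  rw [M.g_symm, h_g_neg, M.g_symm]

theorem h_g_add' (X Y Z : V) : M.g X (Y + Z) = M.g X Y + M.g X Z := by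
  rw [M.g_symm, M.g_add, M.g_symm Y, M.g_symm Z]

theorem h_g_sub' (X Y Z : V) : M.g X (Y - Z) = M.g X Y - M.g X Z := by
  rw [sub_eq_add_neg, h_g_add', h_g_neg', sub_eq_add_neg]

theorem h_g_sub (X Y Z : V) : M.g (X - Y) Z = M.g X Z - M.g Y Z := by
  rw [sub_eq_add_neg, M.g_add, h_g_neg, sub_eq_add_neg]

theorem h_nab_zero (X : V) : M.nab X 0 = 0 := by
  have h := M.nab_add X 0 0
  simp only [add_zero] at h
  exact left_eq_add.mp h

theorem h_nab_neg (X Y : V) : M.nab X (-Y) = -M.nab X Y := by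
  have h := M.nab_add X Y (-Y)
  rw [add_neg_cancel, h_nab_zero] at h
  exact (neg_eq_of_add_eq_zero_right h.symm).symm

theorem h_nab2 (A : V → V) (X Y Z : V) :
    M.nab2 (M.omega A) X Y Z = M.g Y (M.nab X (A Z)) - M.g Y (A (M.nab X Z)) := by
  simp only [nab2, omega, M.nab_metric]
  ring

/-- the properties of a compatible almost complex structure -/
structure Cpx (A : V → V) : Prop where
  add : ∀ X Y, A (X + Y) = A X + A Y
  neg : ∀ X, A (-X) = -A X
  sq : ∀ X, A (A X) = -X
  skew : ∀ X Y, M.g (A X) Y = -M.g X (A Y)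

variable {M}

theorem h_cpx {A : V → V} (hl : ∀ (f : C) X Y, A (f • X + Y) = f • A X + A Y)
    (hs : ∀ X, A (A X) = -X) (hm : ∀ X Y, M.g (A X) (A Y) = M.g X Y) : Cpx M A := by
  have ha : ∀ X Y, A (X + Y) = A X + A Y := fun X Y => by simpa using hl 1 X Y
  have h0 : A 0 = 0 := by
    have h := ha 0 0
    simp only [add_zero] at h
    exact left_eq_add.mp h
  have hn : ∀ X, A (-X) = -A X := fun X => by simpa [h0] using hl (-1) X 0
  refine ⟨ha, hn, hs, fun X Y => ?_⟩
  rw [← hm X (A Y), hs, h_g_neg', neg_neg]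

theorem Cpx.negc {A : V → V} (h : Cpx M A) : Cpx M (fun X => -A X) where
  add X Y := by rw [h.add, neg_add]
  neg X := by rw [h.neg]
  sq X := by rw [h.neg, h.sq, neg_neg]
  skew X Y := by rw [h_g_neg, h_g_neg', h.skew]

theorem Cpx.omega_skew {A : V → V} (h : Cpx M A) (X Y : V) :
    M.omega A X Y = -M.omega A Y X := by
  simp only [omega]
  rw [M.g_symm, h.skew]

theorem Cpx.nab_skew {A : V → V} (h : Cpx M A) (X Y Z : V) :
    M.nab2 (M.omega A) X Y Z = -M.nab2 (M.omega A) X Z Y := by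
  simp only [nab2]
  rw [h.omega_skew Y Z, h_D_neg, h.omega_skew (M.nab X Y) Z, h.omega_skew Y (M.nab X Z)]
  ring

theorem h_nab2_neg3 {A : V → V} (h : Cpx M A) (X Y Z : V) :
    M.nab2 (M.omega A) X Y (-Z) = -M.nab2 (M.omega A) X Y Z := by
  simp only [h_nab2, h.neg, h_nab_neg, h_g_neg']
  ring

theorem h_nab2_neg2 (A : V → V) (X Y Z : V) :
    M.nab2 (M.omega A) X (-Y) Z = -M.nab2 (M.omega A) X Y Z := by
  simp only [h_nab2, h_g_neg]
  ring

theorem Cpx.move {A : V → V} (h : Cpx M A) (X Y Z : V) :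
    M.nab2 (M.omega A) X (A Y) Z = M.nab2 (M.omega A) X Y (A Z) := by
  simp only [h_nab2, h.skew, h.sq, h_nab_neg, h_g_neg']
  ring

theorem Cpx.d2_eq {A : V → V} (h : Cpx M A) (X Y Z : V) :
    M.d2 (M.omega A) X Y Z = M.nab2 (M.omega A) X Y Z + M.nab2 (M.omega A) Y Z X
      + M.nab2 (M.omega A) Z X Y := by
  simp only [d2, nab2]
  rw [h.omega_skew X Z, h_D_neg, h.omega_skew Y (M.nab X Z), h.omega_skew Z (M.nab Y X),
    h.omega_skew X (M.nab Z Y)]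
  simp only [omega, ← M.torsion_free, h_g_sub]
  ring

theorem h_prod {A B E : V → V} (hA : Cpx M A) (hE : ∀ X, E X = A (B X)) (X Y Z : V) :
    M.nab2 (M.omega E) X Y Z
      = M.nab2 (M.omega A) X Y (B Z) - M.nab2 (M.omega B) X (A Y) Z := by
  simp only [h_nab2, hE, hA.skew]
  ring

theorem h_main {A B E : V → V} (hA : Cpx M A) (hB : Cpx M B) (hE' : Cpx M E)
    (hE : ∀ X, E X = A (B X)) (hAB : ∀ X, A (B X) = -B (A X)) (X Y Z : V) :
    2 * M.nab2 (M.omega A) X Y Z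
      = M.d2 (M.omega A) X Y Z - M.d2 (M.omega A) X (A Y) (A Z)
        + M.d2 (M.omega B) (B X) (A Y) Z + M.d2 (M.omega B) (B X) Y (A Z)
        + M.d2 (M.omega E) (B X) Y Z - M.d2 (M.omega E) (B X) (A Y) (A Z) := by
  have hBA : ∀ X, B (A X) = -A (B X) := fun X => by rw [hAB, neg_neg]
  simp only [hA.d2_eq, hB.d2_eq, hE'.d2_eq]
  rw [hE'.nab_skew Z (B X) Y, hE'.nab_skew (A Z) (B X) (A Y)]
  simp only [h_prod hA hE, hA.sq, hB.sq, hA.move, h_nab2_neg2, h_nab2_neg3 hA,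
    hBA, hA.neg]
  rw [hB.nab_skew Z (B X) (A Y), hB.nab_skew (A Z) (B X) Y, hA.nab_skew Z X Y,
    hA.nab_skew (A Z) X (A Y)]
  simp only [hA.move, hA.neg, hA.sq, h_nab2_neg3 hA]
  ring

theorem h_formula1 {A B E : V → V} (hA : Cpx M A) (hB : Cpx M B) (hE' : Cpx M E)
    (hE : ∀ X, E X = A (B X)) (hAB : ∀ X, A (B X) = -B (A X)) :
    (2:ℝ) • M.nab2 (M.omega A)
      = (M.d2 (M.omega A) - op23 A (M.d2 (M.omega A)))
        + (op2 A (op1 B (M.d2 (M.omega B))) + op3 A (op1 B (M.d2 (M.omega B))))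
        - (op1 B (M.d2 (M.omega E)) - op23 A (op1 B (M.d2 (M.omega E)))) := by
  funext X Y Z
  have h := h_main hA hB hE' hE hAB X Y Z
  simp only [Pi.smul_apply, Pi.add_apply, Pi.sub_apply, op1, op2, op3, op23, two_smul]
  linear_combination h

theorem h_d2_neg {A : V → V} :
    M.d2 (M.omega (fun X => -A X)) = -M.d2 (M.omega A) := by
  funext X Y Z
  simp only [Pi.neg_apply, d2, omega, h_g_neg', h_D_neg]
  ring

theorem h_formula2 {A B E : V → V} (hA : Cpx M A) (hB : Cpx M B) (hE' : Cpx M E)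
    (hE : ∀ X, E X = A (B X)) (hAB : ∀ X, A (B X) = -B (A X)) :
    (2:ℝ) • M.nab2 (M.omega A)
      = (M.d2 (M.omega A) - op23 A (M.d2 (M.omega A)))
        + (op2 A (op1 E (M.d2 (M.omega E))) + op3 A (op1 E (M.d2 (M.omega E))))
        + (op1 E (M.d2 (M.omega B)) - op23 A (op1 E (M.d2 (M.omega B)))) := by
  have h := h_formula1 (E := fun X => -B X) hA hE' hB.negc
    (fun X => by rw [hE, hA.sq]) (fun X => by rw [hE, hE, hA.sq, hAB, hA.sq, hB.neg, neg_neg])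
  rw [h, h_d2_neg]
  funext X Y Z
  simp only [Pi.add_apply, Pi.sub_apply, Pi.neg_apply, op1, op2, op3, op23]
  ring

end helpers

end AQH

open AQH in
/-- On an almost quaternion-Hermitian manifold, for any local
adapted basis `I, J, K`:
`2∇ω_I = (1 - I_(23)) dω_I + (I_(2) + I_(3)) J_(1) dω_J - (1 - I_(23)) J_(1) dω_K`
and
`2∇ω_I = (1 - I_(23)) dω_I + (I_(2) + I_(3)) K_(1) dω_K + (1 - I_(23)) K_(1) dω_J`,
together with the formulas obtained by cyclic permutation of `(I, J, K)`. -/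
theorem statement2 {n : ℕ} {C V : Type*} [CommRing C] [Algebra ℝ C] [AddCommGroup V]
    [Module C V] [Module ℝ V] [IsScalarTower ℝ C V] (M : AQH n C V) :
    -- formulas for ∇ω_I
    ((2:ℝ) • M.nab2 (M.omega M.I)
      = (M.d2 (M.omega M.I) - op23 M.I (M.d2 (M.omega M.I)))
        + (op2 M.I (op1 M.J (M.d2 (M.omega M.J))) + op3 M.I (op1 M.J (M.d2 (M.omega M.J))))
        - (op1 M.J (M.d2 (M.omega M.K)) - op23 M.I (op1 M.J (M.d2 (M.omega M.K))))) ∧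
    ((2:ℝ) • M.nab2 (M.omega M.I)
      = (M.d2 (M.omega M.I) - op23 M.I (M.d2 (M.omega M.I)))
        + (op2 M.I (op1 M.K (M.d2 (M.omega M.K))) + op3 M.I (op1 M.K (M.d2 (M.omega M.K))))
        + (op1 M.K (M.d2 (M.omega M.J)) - op23 M.I (op1 M.K (M.d2 (M.omega M.J))))) ∧
    -- formulas for ∇ω_J (cyclic permutation I → J → K → I)
    ((2:ℝ) • M.nab2 (M.omega M.J)
      = (M.d2 (M.omega M.J) - op23 M.J (M.d2 (M.omega M.J)))
        + (op2 M.J (op1 M.K (M.d2 (M.omega M.K))) + op3 M.J (op1 M.K (M.d2 (M.omega M.K))))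
        - (op1 M.K (M.d2 (M.omega M.I)) - op23 M.J (op1 M.K (M.d2 (M.omega M.I))))) ∧
    ((2:ℝ) • M.nab2 (M.omega M.J)
      = (M.d2 (M.omega M.J) - op23 M.J (M.d2 (M.omega M.J)))
        + (op2 M.J (op1 M.I (M.d2 (M.omega M.I))) + op3 M.J (op1 M.I (M.d2 (M.omega M.I))))
        + (op1 M.I (M.d2 (M.omega M.K)) - op23 M.J (op1 M.I (M.d2 (M.omega M.K))))) ∧
    -- formulas for ∇ω_K
    ((2:ℝ) • M.nab2 (M.omega M.K)
      = (M.d2 (M.omega M.K) - op23 M.K (M.d2 (M.omega M.K)))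
        + (op2 M.K (op1 M.I (M.d2 (M.omega M.I))) + op3 M.K (op1 M.I (M.d2 (M.omega M.I))))
        - (op1 M.I (M.d2 (M.omega M.J)) - op23 M.K (op1 M.I (M.d2 (M.omega M.J))))) ∧
    ((2:ℝ) • M.nab2 (M.omega M.K)
      = (M.d2 (M.omega M.K) - op23 M.K (M.d2 (M.omega M.K)))
        + (op2 M.K (op1 M.J (M.d2 (M.omega M.J))) + op3 M.K (op1 M.J (M.d2 (M.omega M.J))))
        + (op1 M.J (M.d2 (M.omega M.I)) - op23 M.K (op1 M.J (M.d2 (M.omega M.I))))) := by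
  have hI : Cpx M M.I := h_cpx M.I_lin M.I_sq M.I_metric
  have hJ : Cpx M M.J := h_cpx M.J_lin M.J_sq M.J_metric
  have hJI : ∀ X, M.J (M.I X) = -M.I (M.J X) := fun X => by rw [M.anticomm, neg_neg]
  have hK : Cpx M M.K := h_cpx M.K_lin
    (fun X => by rw [M.K_def, M.K_def, hJI, M.J_sq, hI.neg, hI.neg, hI.neg, neg_neg, M.I_sq])
    (fun X Y => by rw [M.K_def, M.K_def, M.I_metric, M.J_metric])
  -- I = J K, J K = - K J
  have h1 : ∀ X, M.I X = M.J (M.K X) := fun X => by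
    rw [M.K_def, hJI, M.J_sq, hI.neg, neg_neg]
  have h1' : ∀ X, M.J (M.K X) = -M.K (M.J X) := fun X => by
    rw [← h1, M.K_def, M.J_sq, hI.neg, neg_neg]
  -- J = K I, K I = - I K
  have h2 : ∀ X, M.J X = M.K (M.I X) := fun X => by
    rw [M.K_def, hJI, hI.neg, M.I_sq, neg_neg]
  have h2' : ∀ X, M.K (M.I X) = -M.I (M.K X) := fun X => by
    rw [← h2, M.K_def, M.I_sq, neg_neg]
  exact ⟨h_formula1 hI hJ hK M.K_def M.anticomm, h_formula2 hI hJ hK M.K_def M.anticomm,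
    h_formula1 hJ hK hI h1 h1', h_formula2 hJ hK hI h1 h1',
    h_formula1 hK hI hJ h2 h2', h_formula2 hK hI hJ h2 h2'⟩
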